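/- Uniform coercivity in the hyperbolic case: for every compact set K ⊂ X there exist constants A > 0 and B, C ≥ 0, independent of x and T, such that for all x ∈ K, all T ∈ (1, +∞], and all φ ∈ D_0^{1,2}(1, T), one has A_{x,[1,T]}(φ) ≥ A ‖φ‖_{D_T}² − B ‖φ‖_{D_T} − C. -/

import Mathlib

open MeasureTheory Real Set Filter Topology
open scoped RealInnerProductSpace ENNReal

noncomputable section
namespace NBodyHJ

attribute [local instance] Classical.propDecidable

abbrev Conf (d N : ℕ) := Fin N → EuclideanSpace ℝ (Fin d)

variable {d N : ℕ}

/-- The mass inner product on the configuration space. -/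
def minner (m : Fin N → ℝ) (x y : Conf d N) : ℝ := ∑ i, m i * ⟪x i, y i⟫

/-- The mass norm on the configuration space. -/
def mnorm (m : Fin N → ℝ) (x : Conf d N) : ℝ := Real.sqrt (minner m x x)

/-- Membership in the zero-barycenter configuration space `X`. -/
def inX (m : Fin N → ℝ) (x : Conf d N) : Prop := ∑ i, m i • x i = 0

/-- Collision configurations. -/
def collision (x : Conf d N) : Prop := ∃ i j, i ≠ j ∧ x i = x j

/-- Membership in the collision-free zero-barycenter space `Ω`. -/
def inOmega (m : Fin N → ℝ) (x : Conf d N) : Prop := inX m x ∧ ¬ collision x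

/-- The Newtonian potential (with junk value `0` for a colliding pair). -/
def U (m : Fin N → ℝ) (x : Conf d N) : ℝ :=
  ∑ i : Fin N, ∑ j : Fin N, if i < j then m i * m j / ‖x i - x j‖ else 0

/-- The time interval `(t₀, T)`, where `T ∈ (t₀, +∞]` is extended-real. -/
def timeSet (t0 : ℝ) (T : EReal) : Set ℝ := {t : ℝ | t0 < t ∧ (t : EReal) < T}

/-- Membership of the pair (curve, derivative) `(φ, φ')` in `D₀^{1,2}(t₀, T)`:
`φ` starts at `0`, takes values in `X`, is the integral of `φ'` (hence locally
absolutely continuous), and `φ'` has finite `L²` mass norm on `(t₀, T)`. -/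
def InD (m : Fin N → ℝ) (t0 : ℝ) (T : EReal) (φ φ' : ℝ → Conf d N) : Prop :=
  φ t0 = 0 ∧
  (∀ t : ℝ, t0 ≤ t → (t : EReal) < T → inX m (φ t)) ∧
  (∀ t : ℝ, t0 ≤ t → (t : EReal) < T → φ t = ∫ s in Set.Ioc t0 t, φ' s) ∧
  (∀ t : ℝ, t0 ≤ t → (t : EReal) < T → IntegrableOn φ' (Set.Ioc t0 t)) ∧
  IntegrableOn (fun t => (mnorm m (φ' t)) ^ 2) (timeSet t0 T)

/-- The norm `‖φ‖_{D_T}`. -/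
def Dnorm (m : Fin N → ℝ) (t0 : ℝ) (T : EReal) (φ' : ℝ → Conf d N) : ℝ :=
  Real.sqrt (∫ t in timeSet t0 T, (mnorm m (φ' t)) ^ 2)

/-- The motion `γ(t) = φ(t) + t a + x - a` associated with `φ` in the hyperbolic case. -/
def hypCurve (a x : Conf d N) (φ : ℝ → Conf d N) (t : ℝ) : Conf d N :=
  φ t + t • a + x - a

/-- The integrand of the hyperbolic renormalized Lagrangian action. -/
def hypIntegrand (m : Fin N → ℝ) (a x : Conf d N) (φ φ' : ℝ → Conf d N) (t : ℝ) : ℝ :=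
  (mnorm m (φ' t)) ^ 2 / 2 + U m (hypCurve a x φ t) - U m (t • a)

/-- The hyperbolic renormalized Lagrangian action `A_{x,[1,T]}(φ)`, with values in
`ℝ ∪ {+∞}` : it equals the integral of the renormalized Lagrangian if this integrand is
integrable and the motion is a.e. collision-free, and `+∞` otherwise. -/
def hypAction (m : Fin N → ℝ) (a x : Conf d N) (T : EReal) (φ φ' : ℝ → Conf d N) : EReal :=
  if IntegrableOn (hypIntegrand m a x φ φ') (timeSet 1 T) ∧
      (∀ᵐ t ∂volume.restrict (timeSet 1 T), ¬ collision (hypCurve a x φ t))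
  then ((∫ t in timeSet 1 T, hypIntegrand m a x φ φ' t : ℝ) : EReal)
  else (⊤ : EReal)

/-- The infimum of the hyperbolic renormalized action over `D₀^{1,2}(1,T)`. -/
def hypInf (m : Fin N → ℝ) (a x : Conf d N) (T : EReal) : EReal :=
  ⨅ (φ : ℝ → Conf d N) (φ' : ℝ → Conf d N) (_ : InD m 1 T φ φ'), hypAction m a x T φ φ'

/-- The renormalized value function `v(x)` in the hyperbolic case. -/
def hypValue (m : Fin N → ℝ) (a x : Conf d N) : ℝ :=
  (hypInf m a x ⊤).toReal - minner m a x

lemma minner_self_nonneg {m : Fin N → ℝ} (hm : ∀ i, 0 < m i) (v : Conf d N) :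
    0 ≤ minner m v v :=
  Finset.sum_nonneg fun i _ => mul_nonneg (hm i).le real_inner_self_nonneg

lemma mnorm_sq {m : Fin N → ℝ} (hm : ∀ i, 0 < m i) (v : Conf d N) :
    mnorm m v ^ 2 = ∑ i, m i * ‖v i‖ ^ 2 := by
  rw [mnorm, Real.sq_sqrt (minner_self_nonneg hm v)]
  simp [minner]

/-- Each component is controlled by the mass norm. -/
lemma norm_apply_sq_le {m : Fin N → ℝ} (hm : ∀ i, 0 < m i) (v : Conf d N) (i : Fin N) :
    ‖v i‖ ^ 2 ≤ (∑ j, (m j)⁻¹) * mnorm m v ^ 2 := by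
  have h1 : (m i)⁻¹ ≤ ∑ j, (m j)⁻¹ :=
    Finset.single_le_sum (f := fun j => (m j)⁻¹) (fun j _ => (inv_pos.2 (hm j)).le)
      (Finset.mem_univ i)
  have h2 : m i * ‖v i‖ ^ 2 ≤ mnorm m v ^ 2 := by
    rw [mnorm_sq hm]
    exact Finset.single_le_sum (f := fun j => m j * ‖v j‖ ^ 2)
      (fun j _ => mul_nonneg (hm j).le (sq_nonneg _)) (Finset.mem_univ i)
  calc ‖v i‖ ^ 2 = (m i)⁻¹ * (m i * ‖v i‖ ^ 2) := by
        rw [inv_mul_cancel_left₀ (hm i).ne']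
    _ ≤ _ := mul_le_mul h1 h2 (mul_nonneg (hm i).le (sq_nonneg _))
        ((inv_pos.2 (hm i)).le.trans h1)

/-- Young's inequality for the sup norm against the mass norm. -/
lemma norm_le_young {m : Fin N → ℝ} (hm : ∀ i, 0 < m i) (v : Conf d N) {l : ℝ} (hl : 0 < l) :
    ‖v‖ ≤ l * (∑ j, (m j)⁻¹) / 2 * mnorm m v ^ 2 + (2 * l)⁻¹ := by
  have hk : 0 ≤ ∑ j, (m j)⁻¹ := Finset.sum_nonneg fun j _ => (inv_pos.2 (hm j)).le
  refine (pi_norm_le_iff_of_nonneg (by positivity)).2 fun i => ?_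
  have h := norm_apply_sq_le hm v i
  have h1 : ‖v i‖ ≤ l / 2 * ‖v i‖ ^ 2 + (2 * l)⁻¹ := by
    have h2 : l / 2 * ‖v i‖ ^ 2 + (2 * l)⁻¹ - ‖v i‖ = (l * ‖v i‖ - 1) ^ 2 / (2 * l) := by
      field_simp
      ring
    have h3 : 0 ≤ (l * ‖v i‖ - 1) ^ 2 / (2 * l) := by positivity
    linarith
  have h4 := mul_le_mul_of_nonneg_left h (half_pos hl).le
  linarith

lemma measurableSet_timeSet (t0 : ℝ) (T : EReal) : MeasurableSet (timeSet t0 T) :=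
  measurableSet_Ioi.inter (measurable_coe_real_ereal measurableSet_Iio)

lemma Dnorm_sq (m : Fin N → ℝ) (t0 : ℝ) (T : EReal) (φ' : ℝ → Conf d N) :
    Dnorm m t0 T φ' ^ 2 = ∫ t in timeSet t0 T, mnorm m (φ' t) ^ 2 :=
  Real.sq_sqrt (integral_nonneg fun _ => sq_nonneg _)

/-- Curves in `D₀^{1,2}(1, T)` grow at most like `√t`. -/
lemma InD.norm_le {m : Fin N → ℝ} (hm : ∀ i, 0 < m i) {T : EReal} {φ φ' : ℝ → Conf d N}
    (h : InD m 1 T φ φ') {t : ℝ} (ht : t ∈ timeSet 1 T) {ε : ℝ} (hε : 0 < ε) :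
    ‖φ t‖ ≤ √t * (ε * (∑ j, (m j)⁻¹) * Dnorm m 1 T φ' ^ 2 + ε⁻¹) / 2 := by
  obtain ⟨-, -, hφ, hint, hsq⟩ := h
  obtain ⟨ht1, htT⟩ := ht
  have hs : 0 < √t := Real.sqrt_pos.2 (by linarith)
  have hst : √t * √t = t := Real.mul_self_sqrt (by linarith)
  have hk : 0 ≤ ∑ j, (m j)⁻¹ := Finset.sum_nonneg fun j _ => (inv_pos.2 (hm j)).le
  have hsub : Ioc 1 t ⊆ timeSet 1 T := fun s hs' =>
    ⟨hs'.1, (EReal.coe_le_coe_iff.2 hs'.2).trans_lt htT⟩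
  have hsq' := hsq.mono_set hsub
  have hmono : ∫ s in Ioc 1 t, mnorm m (φ' s) ^ 2 ≤ Dnorm m 1 T φ' ^ 2 := by
    rw [Dnorm_sq]
    exact setIntegral_mono_set hsq (ae_of_all _ fun _ => sq_nonneg _) hsub.eventuallyLE
  have hl : 0 < ε * √t := mul_pos hε hs
  have hconst : IntegrableOn (fun _ : ℝ => (2 * (ε * √t))⁻¹) (Ioc 1 t) :=
    integrableOn_const (by simp)
  have h1 : ‖φ t‖ ≤ (ε * √t) * (∑ j, (m j)⁻¹) / 2 * (∫ s in Ioc 1 t, mnorm m (φ' s) ^ 2)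
      + (t - 1) * (2 * (ε * √t))⁻¹ := by
    rw [hφ t ht1.le htT]
    calc ‖∫ s in Ioc 1 t, φ' s‖ ≤ ∫ s in Ioc 1 t, ‖φ' s‖ := norm_integral_le_integral_norm _
      _ ≤ ∫ s in Ioc 1 t, ((ε * √t) * (∑ j, (m j)⁻¹) / 2 * mnorm m (φ' s) ^ 2
            + (2 * (ε * √t))⁻¹) :=
          integral_mono (hint t ht1.le htT).norm ((hsq'.const_mul _).add hconst)
            fun s => norm_le_young hm (φ' s) hl
      _ = _ := by
          rw [integral_add (hsq'.const_mul _) hconst, integral_const_mul, setIntegral_const]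
          simp [ht1.le]
  have h2 : (t - 1) * (2 * (ε * √t))⁻¹ ≤ √t * ε⁻¹ / 2 := by
    have h3 : √t * ε⁻¹ / 2 = t * (2 * (ε * √t))⁻¹ := by
      nth_rewrite 2 [← hst]
      field_simp
    rw [h3]
    exact mul_le_mul_of_nonneg_right (by linarith) (by positivity)
  have h4 := mul_le_mul_of_nonneg_left hmono
    (by positivity : 0 ≤ (ε * √t) * (∑ j, (m j)⁻¹) / 2)
  calc ‖φ t‖ ≤ _ := h1
    _ ≤ _ := add_le_add h4 h2
    _ = _ := by ring

/-- A Newtonian pair term at distance `g ≤ t α + √t Q` is close to the one at distance `t α`. -/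
lemma inv_sub_inv_le {α t g Q : ℝ} (hα : 0 < α) (ht : 1 < t) (hg : 0 < g) (hQ : 0 ≤ Q)
    (hgle : g ≤ t * α + √t * Q) :
    1 / (t * α) - 1 / g ≤ 1 / α ^ 2 * Q * t ^ (-(3 / 2) : ℝ) := by
  have ht0 : 0 < t := by linarith
  have hs : 0 < √t := Real.sqrt_pos.2 ht0
  have hpow : t ^ (-(3 / 2) : ℝ) = √t / t ^ 2 := by
    rw [Real.sqrt_eq_rpow, ← Real.rpow_natCast t 2, ← Real.rpow_sub ht0]
    norm_num
  have h1 : 1 / (t * α + √t * Q) ≤ 1 / g := one_div_le_one_div_of_le hg hgle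
  have h2 : 1 / (t * α) - 1 / (t * α + √t * Q) = √t * Q / ((t * α) * (t * α + √t * Q)) := by
    have : t * α + √t * Q ≠ 0 := by positivity
    field_simp
    ring
  have h3 : √t * Q / ((t * α) * (t * α + √t * Q)) ≤ √t * Q / ((t * α) * (t * α)) := by
    have : 0 ≤ √t * Q := by positivity
    gcongr
    linarith
  have h4 : √t * Q / ((t * α) * (t * α)) = 1 / α ^ 2 * Q * (√t / t ^ 2) := by
    field_simp
  rw [hpow]
  linarith

/-- The potential along a curve whose deviation from `t • a` is at most of order `√t`. -/
lemma U_smul_sub_U_le {m : Fin N → ℝ} (hm : ∀ i, 0 < m i) {a γ : Conf d N}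
    (ha : ¬ collision a) (hγ : ¬ collision γ) {t Q : ℝ} (ht : 1 < t)
    (hQ : 2 * ‖γ - t • a‖ ≤ √t * Q) :
    U m (t • a) - U m γ ≤
      (∑ i : Fin N, ∑ j : Fin N, if i < j then m i * m j / ‖a i - a j‖ ^ 2 else 0) * Q *
        t ^ (-(3 / 2) : ℝ) := by
  have hQ0 : 0 ≤ Q := nonneg_of_mul_nonneg_right ((by positivity : (0:ℝ) ≤ _).trans hQ)
    (Real.sqrt_pos.2 (by linarith))
  simp only [U, ← Finset.sum_sub_distrib, Finset.sum_mul]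
  refine Finset.sum_le_sum fun i _ => Finset.sum_le_sum fun j _ => ?_
  split_ifs with hij
  · have hpos : ∀ {z : Conf d N}, ¬ collision z → 0 < ‖z i - z j‖ := fun hz =>
      norm_pos_iff.2 (sub_ne_zero.2 fun he => hz ⟨i, j, hij.ne, he⟩)
    have hta : ‖(t • a) i - (t • a) j‖ = t * ‖a i - a j‖ := by
      rw [Pi.smul_apply, Pi.smul_apply, ← smul_sub, norm_smul, Real.norm_of_nonneg (by linarith)]
    have hle : ‖γ i - γ j‖ ≤ t * ‖a i - a j‖ + √t * Q := by
      have he : γ i - γ j =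
          ((t • a) i - (t • a) j) + ((γ - t • a) i - (γ - t • a) j) := by
        simp only [Pi.sub_apply]
        abel
      have h1 := norm_le_pi_norm (γ - t • a) i
      have h2 := norm_le_pi_norm (γ - t • a) j
      have h3 := norm_sub_le ((γ - t • a) i) ((γ - t • a) j)
      rw [he, ← hta]
      refine (norm_add_le _ _).trans (add_le_add le_rfl ?_)
      linarith
    have h := mul_le_mul_of_nonneg_left (inv_sub_inv_le (hpos ha) ht (hpos hγ) hQ0 hle)
      (mul_pos (hm i) (hm j)).le
    rw [hta]
    calc _ = m i * m j * (1 / (t * ‖a i - a j‖) - 1 / ‖γ i - γ j‖) := by ring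
      _ ≤ _ := h
      _ = _ := by ring
  · simp

lemma integrableOn_rpow_timeSet (T : EReal) :
    IntegrableOn (fun t : ℝ => t ^ (-(3 / 2) : ℝ)) (timeSet 1 T) :=
  (integrableOn_Ioi_rpow_of_lt (by norm_num) one_pos).mono_set fun _ ht => ht.1

lemma setIntegral_rpow_timeSet_le (T : EReal) :
    ∫ t in timeSet 1 T, t ^ (-(3 / 2) : ℝ) ≤ 2 := by
  have h : ∫ t in Ioi (1 : ℝ), t ^ (-(3 / 2) : ℝ) = 2 := by
    rw [integral_Ioi_rpow_of_lt (by norm_num) one_pos]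
    norm_num
  have hsub : timeSet 1 T ⊆ Ioi 1 := fun _ ht => ht.1
  have hlt : (-(3 / 2) : ℝ) < -1 := by norm_num
  refine (setIntegral_mono_set (integrableOn_Ioi_rpow_of_lt hlt one_pos) ?_
    hsub.eventuallyLE).trans_eq h
  filter_upwards [ae_restrict_mem measurableSet_Ioi] with t ht
  exact Real.rpow_nonneg (zero_le_one.trans (le_of_lt ht)) _

/-- **Uniform coercivity of the renormalized action, hyperbolic case** : for every compact
set `K ⊆ X` there are constants `A > 0` and `B, C ≥ 0`, independent of `x` and `T`, such
that for all `x ∈ K`, all `T ∈ (1, +∞]` and all `φ ∈ D₀^{1,2}(1,T)`,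
`A_{x,[1,T]}(φ) ≥ A ‖φ‖_{D_T}² − B ‖φ‖_{D_T} − C`. -/
theorem coercivity_hyperbolic {d N : ℕ} (hd : 2 ≤ d) (hN : 2 ≤ N)
    (m : Fin N → ℝ) (hm : ∀ i, 0 < m i)
    (a : Conf d N) (ha : inOmega m a)
    (K : Set (Conf d N)) (hKcpt : IsCompact K) (hKX : ∀ x ∈ K, inX m x) :
    ∃ A > (0:ℝ), ∃ B ≥ (0:ℝ), ∃ C ≥ (0:ℝ), ∀ x ∈ K, ∀ T : EReal, 1 < T →
      ∀ φ φ' : ℝ → Conf d N, InD m 1 T φ φ' →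
        ((A * (Dnorm m 1 T φ') ^ 2 - B * Dnorm m 1 T φ' - C : ℝ) : EReal) ≤
          hypAction m a x T φ φ' := by
  obtain ⟨R, hR⟩ := hKcpt.isBounded.exists_norm_le
  set M := ∑ i : Fin N, ∑ j : Fin N, if i < j then m i * m j / ‖a i - a j‖ ^ 2 else 0 with hMdef
  set κ := ∑ j, (m j)⁻¹ with hκdef
  have hM : 0 ≤ M := Finset.sum_nonneg fun i _ => Finset.sum_nonneg fun j _ => by
    have := hm i
    have := hm j
    split_ifs <;> positivity
  have hκ : 0 ≤ κ := Finset.sum_nonneg fun j _ => (inv_pos.2 (hm j)).le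
  set ε : ℝ := (8 * M * κ + 1)⁻¹ with hεdef
  have hε : 0 < ε := by positivity
  have hεM : 2 * M * (ε * κ) ≤ 1 / 4 := by
    have h1 : ε * (8 * M * κ + 1) = 1 := inv_mul_cancel₀ (by positivity)
    nlinarith
  refine ⟨1 / 4, by norm_num, 0, le_rfl, 2 * M * (ε⁻¹ + 2 * (|R| + ‖a‖)), by positivity, ?_⟩
  intro x hx T _ φ φ' h
  unfold hypAction
  split_ifs with hact
  swap
  · exact le_top
  obtain ⟨hint, hcol⟩ := hact
  rw [EReal.coe_le_coe_iff]
  set D := Dnorm m 1 T φ' with hDdef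
  set Q := ε * κ * D ^ 2 + ε⁻¹ + 2 * (|R| + ‖a‖) with hQdef
  have hQ0 : 0 ≤ Q := by positivity
  have hsq := h.2.2.2.2
  have hrpow := (integrableOn_rpow_timeSet T).const_mul (M * Q)
  have hlow : ∫ t in timeSet 1 T, (mnorm m (φ' t) ^ 2 / 2 - M * Q * t ^ (-(3 / 2) : ℝ)) ≤
      ∫ t in timeSet 1 T, hypIntegrand m a x φ φ' t := by
    refine integral_mono_ae ((hsq.div_const 2).sub hrpow) hint ?_
    filter_upwards [hcol, ae_restrict_mem (measurableSet_timeSet 1 T)] with t hct ht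
    have hs : 1 ≤ √t := Real.one_le_sqrt.2 ht.1.le
    have hdev : 2 * ‖hypCurve a x φ t - t • a‖ ≤ √t * Q := by
      have he : hypCurve a x φ t - t • a = φ t + (x - a) := by
        unfold hypCurve
        abel
      have h1 := h.norm_le hm ht hε
      have h2 : ‖x - a‖ ≤ |R| + ‖a‖ :=
        (norm_sub_le x a).trans (add_le_add ((hR x hx).trans (le_abs_self R)) le_rfl)
      have h3 : |R| + ‖a‖ ≤ √t * (|R| + ‖a‖) := le_mul_of_one_le_left (by positivity) hs
      have h4 := norm_add_le (φ t) (x - a)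
      rw [he, hQdef]
      linarith
    have hU := U_smul_sub_U_le hm ha.2 hct ht.1 hdev
    change _ ≤ mnorm m (φ' t) ^ 2 / 2 + U m (hypCurve a x φ t) - U m (t • a)
    linarith
  rw [integral_sub (hsq.div_const 2) hrpow, integral_div, integral_const_mul, ← Dnorm_sq,
    ← hDdef] at hlow
  have h2 := mul_le_mul_of_nonneg_left (setIntegral_rpow_timeSet_le T) (mul_nonneg hM hQ0)
  have h3 := mul_le_mul_of_nonneg_right hεM (sq_nonneg D)
  refine le_trans ?_ hlow
  rw [hQdef] at h2 ⊢
  linarith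

end NBodyHJ
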